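/- Let d ≥ 3 and let M(N) be the expected minimum bipartite matching length in the Poissonized model on [0,1]^d with intensity N. Then for every integer m ≥ 1 and every N > 0, M(m^d N) / (m^d N)^{1−1/d} ≤ M(N)/N^{1−1/d} + C_d / N^{1/2 − 1/d}, where C_d = 2^d √(2d) Σ_{k=0}^{∞} 2^{−k(d/2−1)} is a finite constant depending only on d. -/

import Mathlib

open MeasureTheory ProbabilityTheory Filter

noncomputable section

/-- The unit cube `[0,1]^d` in Euclidean space `ℝ^d`. -/
def unitCube (d : ℕ) : Set (EuclideanSpace ℝ (Fin d)) :=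
  {x | ∀ i, x i ∈ Set.Icc (0 : ℝ) 1}

/-- The uniform probability measure on the unit cube `[0,1]^d`
(the cube has Lebesgue measure one, so the restriction of Lebesgue measure
to the cube is the uniform probability measure on it). -/
def unifCube (d : ℕ) : Measure (EuclideanSpace ℝ (Fin d)) :=
  volume.restrict (unitCube d)

/-- `LMBMon X Y A B` is the minimum total Euclidean length of a partial bipartite
matching pairing `min A.card B.card` of the points `X j, j ∈ A` with as many of the
points `Y j, j ∈ B`, each pair consisting of one `X`-point and one `Y`-point. -/
def LMBMon {d N₁ N₂ : ℕ} (X : Fin N₁ → EuclideanSpace ℝ (Fin d))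
    (Y : Fin N₂ → EuclideanSpace ℝ (Fin d)) (A : Finset (Fin N₁)) (B : Finset (Fin N₂)) : ℝ :=
  sInf { s | ∃ (σ : Fin (min A.card B.card) ↪ Fin N₁) (τ : Fin (min A.card B.card) ↪ Fin N₂),
    (∀ i, σ i ∈ A) ∧ (∀ i, τ i ∈ B) ∧ s = ∑ i, dist (X (σ i)) (Y (τ i)) }

/-- `LMBM X Y` : the minimum total Euclidean length of a bipartite matching between the
points of `X` and the points of `Y`; if the two families have different cardinalities
`N₁ ≠ N₂`, it is the minimum length of a partial matching pairing `min N₁ N₂` points of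
each family, leaving `|N₁ - N₂|` points unmatched. -/
def LMBM {d N₁ N₂ : ℕ} (X : Fin N₁ → EuclideanSpace ℝ (Fin d))
    (Y : Fin N₂ → EuclideanSpace ℝ (Fin d)) : ℝ :=
  LMBMon X Y Finset.univ Finset.univ

/-- `MP d lam`: the expected length of a minimum bipartite matching in the Poissonized
model on `[0,1]^d` with intensity `lam`: the numbers `n₁, n₂` of points of the two
families are independent Poisson(lam) variables and the points are i.i.d. uniform
on the cube. -/
def MP (d : ℕ) (lam : ℝ) : ℝ :=
  ∑' n₁ : ℕ, ∑' n₂ : ℕ,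
    (Real.exp (-lam) * lam ^ n₁ / n₁.factorial) *
      ((Real.exp (-lam) * lam ^ n₂ / n₂.factorial) *
        ∫ p : (Fin n₁ → EuclideanSpace ℝ (Fin d)) × (Fin n₂ → EuclideanSpace ℝ (Fin d)),
          LMBM p.1 p.2 ∂ ((Measure.pi fun _ => unifCube d).prod (Measure.pi fun _ => unifCube d)))

end

/-! By scaling, `m * M(m ^ d * N)` is the mean matching length of two Poisson samples of intensity
`N` in the cube `[0, m) ^ d`. Inside each of its `m ^ d` unit cells the samples are again Poisson,
so matching cell by cell costs `m ^ d * M(N)` on average but leaves points unmatched. These are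
matched by repeatedly merging `2 ^ d` dyadic cells of side `h` into one of side `2 * h`: the extra
pairs number at most half the sum of `|n₁ - n₂|` over the cells of side `h`, each has length at
most `√d * (2 * h)`, and `E |n₁ - n₂| ≤ √(2 * N * h ^ d)` because the cell counts are independent
Poisson variables. At most `(2 * m / h) ^ d` cells of side `h` are involved, so the merging cost
at `h = 2 ^ k` is proportional to `h ^ (1 - d / 2)`, which is summable over `k` when `d ≥ 3`. -/

open scoped ENNReal NNReal Nat

/-- A partial matching between the finite sets `A` and `B`, encoded as its set of matched pairs. -/
structure IsPartialMatching {α β : Type*} (A : Finset α) (B : Finset β) (M : Finset (α × β)) :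
    Prop where
  subset : M ⊆ A ×ˢ B
  injOn_fst : Set.InjOn Prod.fst (M : Set (α × β))
  injOn_snd : Set.InjOn Prod.snd (M : Set (α × β))

namespace IsPartialMatching

variable {α β : Type*} {A : Finset α} {B : Finset β} {M : Finset (α × β)}

lemma mem_left (hM : IsPartialMatching A B M) {p : α × β} (hp : p ∈ M) : p.1 ∈ A :=
  (Finset.mem_product.1 (hM.subset hp)).1

lemma mem_right (hM : IsPartialMatching A B M) {p : α × β} (hp : p ∈ M) : p.2 ∈ B :=
  (Finset.mem_product.1 (hM.subset hp)).2

lemma card_le_left (hM : IsPartialMatching A B M) : M.card ≤ A.card :=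
  Finset.card_le_card_of_injOn Prod.fst (fun _ hp => hM.mem_left hp) hM.injOn_fst

lemma card_le_right (hM : IsPartialMatching A B M) : M.card ≤ B.card :=
  Finset.card_le_card_of_injOn Prod.snd (fun _ hp => hM.mem_right hp) hM.injOn_snd

lemma map {α' β' : Type*} (hM : IsPartialMatching A B M) (e₁ : α ↪ α') (e₂ : β ↪ β') :
    IsPartialMatching (A.map e₁) (B.map e₂) (M.map (e₁.prodMap e₂)) where
  subset := by
    simp only [Finset.subset_iff, Finset.mem_map, Finset.mem_product]
    rintro _ ⟨p, hp, rfl⟩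
    exact ⟨⟨p.1, hM.mem_left hp, rfl⟩, ⟨p.2, hM.mem_right hp, rfl⟩⟩
  injOn_fst := by
    simp only [Finset.coe_map]
    rintro _ ⟨p, hp, rfl⟩ _ ⟨q, hq, rfl⟩ h
    rw [hM.injOn_fst hp hq (e₁.injective h)]
  injOn_snd := by
    simp only [Finset.coe_map]
    rintro _ ⟨p, hp, rfl⟩ _ ⟨q, hq, rfl⟩ h
    rw [hM.injOn_snd hp hq (e₂.injective h)]

lemma insert [DecidableEq α] [DecidableEq β]
    {a : α} {b : β} (hM : IsPartialMatching A B M) (ha : a ∈ A) (hb : b ∈ B)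
    (haM : a ∉ M.image Prod.fst) (hbM : b ∉ M.image Prod.snd) :
    IsPartialMatching A B (insert (a, b) M) := by
  have hnotMem : (a, b) ∉ (M : Set (α × β)) := fun h => haM (Finset.mem_image_of_mem Prod.fst h)
  refine ⟨Finset.insert_subset (Finset.mk_mem_product ha hb) hM.subset, ?_, ?_⟩
  · rw [Finset.coe_insert, Set.injOn_insert hnotMem, ← Finset.coe_image]
    exact ⟨hM.injOn_fst, haM⟩
  · rw [Finset.coe_insert, Set.injOn_insert hnotMem, ← Finset.coe_image]
    exact ⟨hM.injOn_snd, hbM⟩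

lemma exists_card_add (c : α → β → ℝ) {D : ℝ} (hD : ∀ a ∈ A, ∀ b ∈ B, c a b ≤ D) (r : ℕ)
    (hM : IsPartialMatching A B M) (hcard : M.card + r ≤ min A.card B.card) :
    ∃ M', IsPartialMatching A B M' ∧ M'.card = M.card + r ∧
      ∑ p ∈ M', c p.1 p.2 ≤ ∑ p ∈ M, c p.1 p.2 + r * D := by
  classical
  induction r with
  | zero => exact ⟨M, hM, rfl, by simp⟩
  | succ r ih =>
    obtain ⟨M', hM', hcard', hsum⟩ := ih (by omega)
    have hlt : M'.card < min A.card B.card := by omega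
    obtain ⟨a, ha, haM⟩ := Finset.exists_mem_notMem_of_card_lt_card
      (Finset.card_image_le.trans_lt (hlt.trans_le (min_le_left _ _)) :
        (M'.image Prod.fst).card < _)
    obtain ⟨b, hb, hbM⟩ := Finset.exists_mem_notMem_of_card_lt_card
      (Finset.card_image_le.trans_lt (hlt.trans_le (min_le_right _ _)) :
        (M'.image Prod.snd).card < _)
    have hnotMem : (a, b) ∉ M' := fun h => haM (Finset.mem_image_of_mem Prod.fst h)
    refine ⟨_, hM'.insert ha hb haM hbM, by rw [Finset.card_insert_of_notMem hnotMem]; omega, ?_⟩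
    rw [Finset.sum_insert hnotMem]
    push_cast
    linarith [hD a ha b hb]

variable {ι : Type*} [DecidableEq ι] {f : α → ι} {g : β → ι} {M : ι → Finset (α × β)}

lemma pairwiseDisjoint
    (hM : ∀ i, IsPartialMatching {a ∈ A | f a = i} {b ∈ B | g b = i} (M i)) (s : Set ι) :
    s.PairwiseDisjoint M := fun i _ j _ hij => Finset.disjoint_left.2 fun _ hi hj =>
  hij ((Finset.mem_filter.1 ((hM i).mem_left hi)).2.symm.trans
    (Finset.mem_filter.1 ((hM j).mem_left hj)).2)

lemma biUnion [DecidableEq α] [DecidableEq β]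
    (hM : ∀ i, IsPartialMatching {a ∈ A | f a = i} {b ∈ B | g b = i} (M i)) (t : Finset ι) :
    IsPartialMatching A B (t.biUnion M) where
  subset := Finset.biUnion_subset.2 fun i _ => (hM i).subset.trans
    (Finset.product_subset_product (Finset.filter_subset _ _) (Finset.filter_subset _ _))
  injOn_fst := by
    intro p hp q hq hpq
    obtain ⟨i, -, hpi⟩ := Finset.mem_biUnion.1 hp
    obtain ⟨j, -, hqj⟩ := Finset.mem_biUnion.1 hq
    obtain rfl : f p.1 = i := (Finset.mem_filter.1 ((hM i).mem_left hpi)).2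
    obtain rfl : f q.1 = j := (Finset.mem_filter.1 ((hM j).mem_left hqj)).2
    rw [← hpq] at hqj
    exact (hM _).injOn_fst hpi hqj hpq
  injOn_snd := by
    intro p hp q hq hpq
    obtain ⟨i, -, hpi⟩ := Finset.mem_biUnion.1 hp
    obtain ⟨j, -, hqj⟩ := Finset.mem_biUnion.1 hq
    obtain rfl : g p.2 = i := (Finset.mem_filter.1 ((hM i).mem_right hpi)).2
    obtain rfl : g q.2 = j := (Finset.mem_filter.1 ((hM j).mem_right hqj)).2
    rw [← hpq] at hqj
    exact (hM _).injOn_snd hpi hqj hpq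

end IsPartialMatching

/-- Bounds the number of pairs by which optimal matchings of the fibres fall short of an optimal
matching between `A` and `B`. -/
lemma two_mul_min_card_sub_sum_min_card_le {α β ι : Type*} [DecidableEq ι] {A : Finset α}
    {B : Finset β} {f : α → ι} {g : β → ι} {t : Finset ι} (hf : ∀ a ∈ A, f a ∈ t)
    (hg : ∀ b ∈ B, g b ∈ t) :
    2 * ((min A.card B.card : ℕ) -
      ∑ i ∈ t, (min {a ∈ A | f a = i}.card {b ∈ B | g b = i}.card : ℕ) : ℝ) ≤
    ∑ i ∈ t, |({a ∈ A | f a = i}.card : ℝ) - {b ∈ B | g b = i}.card| := by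
  have hA : (A.card : ℝ) = ∑ i ∈ t, ({a ∈ A | f a = i}.card : ℝ) := by
    exact_mod_cast Finset.card_eq_sum_card_fiberwise hf
  have hB : (B.card : ℝ) = ∑ i ∈ t, ({b ∈ B | g b = i}.card : ℝ) := by
    exact_mod_cast Finset.card_eq_sum_card_fiberwise hg
  have habs (a b : ℕ) : |(a : ℝ) - b| = a + b - 2 * (min a b : ℕ) := by
    push_cast
    linarith [min_add_max (a : ℝ) b, max_sub_min_eq_abs (a : ℝ) b, abs_sub_comm (a : ℝ) b]
  simp only [habs, Finset.sum_sub_distrib, Finset.sum_add_distrib, ← hA, ← hB, ← Finset.mul_sum]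
  push_cast
  linarith [min_le_left (A.card : ℝ) B.card, min_le_right (A.card : ℝ) B.card]

section MatchingLength

variable {d N₁ N₂ : ℕ} (X : Fin N₁ → EuclideanSpace ℝ (Fin d))
  (Y : Fin N₂ → EuclideanSpace ℝ (Fin d)) (A : Finset (Fin N₁)) (B : Finset (Fin N₂))

lemma LMBMon_nonneg : 0 ≤ LMBMon X Y A B := by
  apply Real.sInf_nonneg
  rintro s ⟨σ, τ, -, -, rfl⟩
  positivity

lemma LMBM_nonneg : 0 ≤ LMBM X Y := LMBMon_nonneg X Y _ _

variable {A B} in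
lemma LMBMon_le_sum_dist {M : Finset (Fin N₁ × Fin N₂)} (hM : IsPartialMatching A B M)
    (hcard : M.card = min A.card B.card) :
    LMBMon X Y A B ≤ ∑ p ∈ M, dist (X p.1) (Y p.2) := by
  refine csInf_le ⟨0, ?_⟩ ?_
  · rintro s ⟨σ, τ, -, -, rfl⟩
    positivity
  · let e := (Finset.equivFinOfCardEq hcard).symm
    refine ⟨⟨fun i => (e i).1.1, fun i j h => ?_⟩, ⟨fun i => (e i).1.2, fun i j h => ?_⟩,
      fun i => hM.mem_left (e i).2, fun i => hM.mem_right (e i).2, ?_⟩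
    · exact e.injective (Subtype.ext (hM.injOn_fst (e i).2 (e j).2 h))
    · exact e.injective (Subtype.ext (hM.injOn_snd (e i).2 (e j).2 h))
    · rw [← Finset.sum_coe_sort M, ← e.sum_comp]
      rfl

lemma exists_sum_dist_eq_LMBMon :
    ∃ (σ : Fin (min A.card B.card) ↪ Fin N₁) (τ : Fin (min A.card B.card) ↪ Fin N₂),
      (∀ i, σ i ∈ A) ∧ (∀ i, τ i ∈ B) ∧ LMBMon X Y A B = ∑ i, dist (X (σ i)) (Y (τ i)) := by
  refine Set.Nonempty.csInf_mem (s := {s | ∃ (σ : Fin (min A.card B.card) ↪ Fin N₁)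
    (τ : Fin (min A.card B.card) ↪ Fin N₂), (∀ i, σ i ∈ A) ∧ (∀ i, τ i ∈ B) ∧
      s = ∑ i, dist (X (σ i)) (Y (τ i))}) ?_ (Set.Finite.subset (Set.finite_range
    fun q : (Fin (min A.card B.card) ↪ Fin N₁) × (Fin (min A.card B.card) ↪ Fin N₂) =>
      ∑ i, dist (X (q.1 i)) (Y (q.2 i))) ?_)
  · exact ⟨_, (Fin.castLEEmb (min_le_left _ _)).trans (A.orderEmbOfFin rfl).toEmbedding,
      (Fin.castLEEmb (min_le_right _ _)).trans (B.orderEmbOfFin rfl).toEmbedding,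
      fun i => A.orderEmbOfFin_mem rfl _, fun i => B.orderEmbOfFin_mem rfl _, rfl⟩
  · rintro s ⟨σ, τ, -, -, rfl⟩
    exact ⟨(σ, τ), rfl⟩

lemma exists_isPartialMatching_sum_dist_eq_LMBMon :
    ∃ M, IsPartialMatching A B M ∧ M.card = min A.card B.card ∧
      ∑ p ∈ M, dist (X p.1) (Y p.2) = LMBMon X Y A B := by
  obtain ⟨σ, τ, hσ, hτ, hsum⟩ := exists_sum_dist_eq_LMBMon X Y A B
  let e : Fin (min A.card B.card) ↪ Fin N₁ × Fin N₂ :=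
    ⟨fun i => (σ i, τ i), fun _ _ h => σ.injective (Prod.ext_iff.1 h).1⟩
  refine ⟨Finset.univ.map e, ⟨?_, ?_, ?_⟩, by simp, by rw [Finset.sum_map, hsum]; rfl⟩
  · simp only [Finset.subset_iff, Finset.mem_map, Finset.mem_univ, true_and]
    rintro _ ⟨i, rfl⟩
    exact Finset.mk_mem_product (hσ i) (hτ i)
  · simp only [Finset.coe_map, Finset.coe_univ, Set.image_univ]
    rintro _ ⟨i, rfl⟩ _ ⟨j, rfl⟩ h
    rw [σ.injective h]
  · simp only [Finset.coe_map, Finset.coe_univ, Set.image_univ]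
    rintro _ ⟨i, rfl⟩ _ ⟨j, rfl⟩ h
    rw [τ.injective h]

variable {X Y} in
lemma LMBM_le_card_mul {D : ℝ} (hD : 0 ≤ D) (hdist : ∀ i j, dist (X i) (Y j) ≤ D) :
    LMBM X Y ≤ N₁ * D := by
  obtain ⟨M, hM, -, hsum⟩ := exists_isPartialMatching_sum_dist_eq_LMBMon X Y .univ .univ
  calc LMBM X Y ≤ M.card * D := by
        rw [LMBM, ← hsum, ← nsmul_eq_mul]
        exact Finset.sum_le_card_nsmul M _ D fun p _ => hdist _ _
    _ ≤ N₁ * D := by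
        gcongr
        simpa using hM.card_le_left

variable {X Y} in
lemma LMBM_eq_mul {X' : Fin N₁ → EuclideanSpace ℝ (Fin d)} {Y' : Fin N₂ → EuclideanSpace ℝ (Fin d)}
    {c : ℝ} (hc : 0 ≤ c) (hdist : ∀ i j, dist (X' i) (Y' j) = c * dist (X i) (Y j)) :
    LMBM X' Y' = c * LMBM X Y := by
  rw [LMBM, LMBM, LMBMon, LMBMon, ← smul_eq_mul, ← Real.sInf_smul_of_nonneg hc]
  congr 1
  ext s
  simp only [hdist, ← Finset.mul_sum, Set.mem_smul_set, Set.mem_ofPred_eq, smul_eq_mul]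
  constructor
  · rintro ⟨σ, τ, hσ, hτ, rfl⟩
    exact ⟨_, ⟨σ, τ, hσ, hτ, rfl⟩, rfl⟩
  · rintro ⟨_, ⟨σ, τ, hσ, hτ, rfl⟩, rfl⟩
    exact ⟨σ, τ, hσ, hτ, rfl⟩

lemma LMBMon_map_univ_le {n₁ n₂ : ℕ} (e₁ : Fin n₁ ↪ Fin N₁) (e₂ : Fin n₂ ↪ Fin N₂) :
    LMBMon X Y (Finset.univ.map e₁) (Finset.univ.map e₂) ≤ LMBM (X ∘ e₁) (Y ∘ e₂) := by
  obtain ⟨M, hM, hcard, hsum⟩ :=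
    exists_isPartialMatching_sum_dist_eq_LMBMon (X ∘ e₁) (Y ∘ e₂) .univ .univ
  refine (LMBMon_le_sum_dist X Y (hM.map e₁ e₂) (by simpa using hcard)).trans_eq ?_
  rw [LMBM, ← hsum, Finset.sum_map]
  rfl

lemma measurable_LMBM :
    Measurable fun p : (Fin N₁ → EuclideanSpace ℝ (Fin d)) × (Fin N₂ → EuclideanSpace ℝ (Fin d)) =>
      LMBM p.1 p.2 := by
  let Matching := {M : Finset (Fin N₁ × Fin N₂) // IsPartialMatching .univ .univ M ∧
    M.card = min (Finset.univ : Finset (Fin N₁)).card (Finset.univ : Finset (Fin N₂)).card}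
  have heq (p : (Fin N₁ → EuclideanSpace ℝ (Fin d)) × (Fin N₂ → EuclideanSpace ℝ (Fin d))) :
      LMBM p.1 p.2 = ⨅ M : Matching, ∑ q ∈ M.1, dist (p.1 q.1) (p.2 q.2) := by
    obtain ⟨M, hM, hcard, hsum⟩ := exists_isPartialMatching_sum_dist_eq_LMBMon p.1 p.2 .univ .univ
    have : Nonempty Matching := ⟨⟨M, hM, hcard⟩⟩
    refine le_antisymm (le_ciInf fun M => LMBMon_le_sum_dist _ _ M.2.1 M.2.2) ?_
    rw [LMBM, ← hsum]
    exact ciInf_le (Finite.bddBelow_range _) (⟨M, hM, hcard⟩ : Matching)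
  simp only [heq]
  exact Measurable.iInf fun M => by fun_prop

variable {X Y A B} in
lemma LMBMon_le_sum_fiber {ι : Type*} [DecidableEq ι] {f : Fin N₁ → ι} {g : Fin N₂ → ι}
    {t : Finset ι} {D : ℝ} (hD : 0 ≤ D) (hdist : ∀ i j, dist (X i) (Y j) ≤ D)
    (hf : ∀ a ∈ A, f a ∈ t) (hg : ∀ b ∈ B, g b ∈ t) :
    LMBMon X Y A B ≤ ∑ i ∈ t, (LMBMon X Y {a ∈ A | f a = i} {b ∈ B | g b = i} +
      D / 2 * |({a ∈ A | f a = i}.card : ℝ) - {b ∈ B | g b = i}.card|) := by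
  choose M hM hMcard hMsum using fun i =>
    exists_isPartialMatching_sum_dist_eq_LMBMon X Y {a ∈ A | f a = i} {b ∈ B | g b = i}
  have hdisj := IsPartialMatching.pairwiseDisjoint hM t
  have hU := IsPartialMatching.biUnion hM t
  obtain ⟨r, hr⟩ := Nat.exists_eq_add_of_le (le_min hU.card_le_left hU.card_le_right)
  obtain ⟨M', hM', hM'card, hM'sum⟩ :=
    hU.exists_card_add (fun a b => dist (X a) (Y b)) (fun a _ b _ => hdist a b) r hr.ge
  have htwo_mul_r : 2 * (r : ℝ) ≤
      ∑ i ∈ t, |({a ∈ A | f a = i}.card : ℝ) - {b ∈ B | g b = i}.card| := by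
    have hcard := two_mul_min_card_sub_sum_min_card_le hf hg
    rw [hr, Finset.card_biUnion hdisj] at hcard
    simp only [hMcard] at hcard
    push_cast at hcard ⊢
    linarith
  calc LMBMon X Y A B ≤ ∑ p ∈ M', dist (X p.1) (Y p.2) :=
        LMBMon_le_sum_dist X Y hM' (hM'card.trans hr.symm)
    _ ≤ ∑ i ∈ t, LMBMon X Y {a ∈ A | f a = i} {b ∈ B | g b = i} + r * D := by
        simpa only [Finset.sum_biUnion hdisj, hMsum] using hM'sum
    _ ≤ _ := by
        rw [Finset.sum_add_distrib, ← Finset.mul_sum]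
        nlinarith

end MatchingLength

section ProductMeasures

variable {ι : Type*} [Fintype ι] {α : ι → Type*} [∀ i, MeasurableSpace (α i)]

lemma pi_const_smul {E : Type*} [MeasurableSpace E] (μ : Measure E) [SigmaFinite μ] (c : ℝ≥0) :
    Measure.pi (fun _ : ι => c • μ) = c ^ Fintype.card ι • Measure.pi fun _ => μ := by
  refine Measure.pi_eq fun s _ => ?_
  simp only [Measure.coe_nnreal_smul_apply, Measure.pi_pi, Finset.prod_mul_distrib,
    Finset.prod_const, Finset.card_univ, ENNReal.coe_pow]

lemma pi_eq_sum_pi_restrict [DecidableEq ι] (μ : ∀ i, Measure (α i)) [∀ i, SigmaFinite (μ i)]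
    {A : ∀ i, Set (α i)} (hA : ∀ i, MeasurableSet (A i)) :
    Measure.pi μ = ∑ S : Finset ι,
      Measure.pi fun i => if i ∈ S then (μ i).restrict (A i) else (μ i).restrict (A i)ᶜ := by
  have hfin (S : Finset ι) (i : ι) :
      SigmaFinite (if i ∈ S then (μ i).restrict (A i) else (μ i).restrict (A i)ᶜ) := by
    split_ifs <;> infer_instance
  refine Measure.pi_eq fun s _ => ?_
  simp only [Measure.finsetSum_apply, Measure.pi_pi]
  calc ∑ S : Finset ι, ∏ i, (if i ∈ S then (μ i).restrict (A i) else (μ i).restrict (A i)ᶜ) (s i)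
      = ∏ i, ((μ i).restrict (A i) (s i) + (μ i).restrict (A i)ᶜ (s i)) := by
        rw [Finset.prod_add, Finset.powerset_univ]
        refine Finset.sum_congr rfl fun S _ => ?_
        rw [← Finset.prod_mul_prod_compl S, Finset.compl_eq_univ_sdiff]
        congr 1
        · exact Finset.prod_congr rfl fun i hi => by rw [if_pos hi]
        · exact Finset.prod_congr rfl fun i hi => by rw [if_neg (Finset.mem_sdiff.1 hi).2]
    _ = ∏ i, μ i (s i) := by
        simp_rw [← Measure.add_apply, Measure.restrict_add_restrict_compl (hA _)]

lemma map_comp_pi {κ : Type*} [Fintype κ] (μ : ∀ i, Measure (α i)) [∀ i, SigmaFinite (μ i)]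
    (p : ι → Prop) [DecidablePred p] (e : κ ≃ {i // p i}) :
    (Measure.pi μ).map (fun x k => x (e k)) =
      (∏ i : {i // ¬p i}, μ i Set.univ) • Measure.pi fun k => μ (e k) := by
  have hsymm := (measurePreserving_piCongrLeft (fun i : {i // p i} => μ i) e).symm
  have hfst : ((Measure.pi fun i : {i // p i} => μ i).prod
      (Measure.pi fun i : {i // ¬p i} => μ i)).map Prod.fst = _ := Measure.map_fst_prod
  rw [← (measurePreserving_piEquivPiSubtypeProd μ p).map_eq,
    Measure.map_map measurable_fst (MeasurableEquiv.measurable _), Measure.pi_univ] at hfst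
  rw [← hsymm.map_eq, ← Measure.map_smul, ← hfst,
    Measure.map_map (MeasurableEquiv.measurable _) (by fun_prop)]
  congr 1

end ProductMeasures

/-- A finite sample of points of `E`: the sample size together with the points in some order. -/
abbrev Sample (E : Type*) : Type _ := Σ n : ℕ, Fin n → E

lemma measurable_sigma {ι γ : Type*} {β : ι → Type*} [∀ i, MeasurableSpace (β i)]
    [MeasurableSpace γ] {f : (Σ i, β i) → γ} (hf : ∀ i, Measurable fun x => f ⟨i, x⟩) :
    Measurable f := fun _ hs => MeasurableSpace.measurableSet_iInf.2 fun i => hf i hs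

lemma measurableEmbedding_sigmaMk {ι : Type*} {β : ι → Type*} [∀ i, MeasurableSpace (β i)]
    (i : ι) : MeasurableEmbedding (Sigma.mk i : β i → Σ i, β i) where
  injective := sigma_mk_injective
  measurable := fun _ hs => MeasurableSpace.measurableSet_iInf.1 hs i
  measurableSet_image' := fun s hs => MeasurableSpace.measurableSet_iInf.2 fun j => by
    change MeasurableSet (Sigma.mk j ⁻¹' (Sigma.mk i '' s))
    obtain rfl | hij := eq_or_ne j i
    · rwa [Set.preimage_image_eq _ sigma_mk_injective]
    · rw [Set.preimage_image_sigmaMk_of_ne hij]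
      exact MeasurableSet.empty

lemma measurable_sigma_prod {ι ι' γ : Type*} [Countable ι] [Countable ι'] {β : ι → Type*}
    {β' : ι' → Type*} [∀ i, MeasurableSpace (β i)] [∀ i, MeasurableSpace (β' i)]
    [MeasurableSpace γ] {f : (Σ i, β i) × (Σ i, β' i) → γ}
    (hf : ∀ i i', Measurable fun p : β i × β' i' => f (⟨i, p.1⟩, ⟨i', p.2⟩)) : Measurable f := by
  intro s hs
  have hcover : f ⁻¹' s = ⋃ i, ⋃ i', Prod.map (Sigma.mk i) (Sigma.mk i') ''
      ((fun p : β i × β' i' => f (⟨i, p.1⟩, ⟨i', p.2⟩)) ⁻¹' s) := by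
    ext ⟨⟨i, x⟩, ⟨i', y⟩⟩
    simp only [Set.mem_iUnion]
    constructor
    · exact fun h => ⟨i, i', (x, y), h, rfl⟩
    · rintro ⟨_, _, q, hq, heq⟩
      rw [← heq]
      exact hq
  rw [hcover]
  exact .iUnion fun i => .iUnion fun i' => ((measurableEmbedding_sigmaMk i).prodMap
    (measurableEmbedding_sigmaMk i')).measurableSet_image.2 (hf i i' hs)

namespace Sample

variable {E F : Type*}

/-- The subsample consisting of the points with index in `S`. -/
def select (s : Sample E) (S : Finset (Fin s.1)) : Sample E :=
  ⟨S.card, s.2 ∘ S.orderEmbOfFin rfl⟩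

open Classical in
/-- The subsample consisting of the points lying in `A`. -/
noncomputable def restrict (A : Set E) (s : Sample E) : Sample E :=
  s.select {i | s.2 i ∈ A}

/-- The image of a sample under a map. -/
def map (T : E → F) (s : Sample E) : Sample F :=
  ⟨s.1, T ∘ s.2⟩

lemma restrict_eq_select {A : Set E} {s : Sample E} {S : Finset (Fin s.1)}
    (h : ∀ i, s.2 i ∈ A ↔ i ∈ S) : s.restrict A = s.select S := by
  rw [restrict]
  congr 1
  ext i
  simp [h]

variable [MeasurableSpace E] [MeasurableSpace F]

lemma measurable_fst : Measurable (Sigma.fst : Sample E → ℕ) :=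
  measurable_sigma fun _ => measurable_const

lemma measurable_select {n : ℕ} (S : Finset (Fin n)) :
    Measurable fun x : Fin n → E => select ⟨n, x⟩ S :=
  (measurableEmbedding_sigmaMk S.card).measurable.comp
    (measurable_pi_lambda _ fun i => measurable_pi_apply (S.orderEmbOfFin rfl i))

lemma measurable_restrict {A : Set E} (hA : MeasurableSet A) :
    Measurable (restrict A : Sample E → Sample E) := by
  refine measurable_sigma fun n U hU => ?_
  have hcover : (fun x : Fin n → E => restrict A ⟨n, x⟩) ⁻¹' U = ⋃ S : Finset (Fin n),
      {x | ∀ i, x i ∈ A ↔ i ∈ S} ∩ (fun x => select ⟨n, x⟩ S) ⁻¹' U := by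
    classical
    ext x
    simp only [Set.mem_preimage, Set.mem_iUnion, Set.mem_inter_iff, Set.mem_ofPred_eq]
    constructor
    · intro hx
      have h (i : Fin n) : x i ∈ A ↔ i ∈ ({i | x i ∈ A} : Finset (Fin n)) := by simp
      exact ⟨_, h, restrict_eq_select (s := ⟨n, x⟩) h ▸ hx⟩
    · rintro ⟨S, h, hx⟩
      exact restrict_eq_select (s := ⟨n, x⟩) h ▸ hx
  rw [hcover]
  refine .iUnion fun S => .inter (measurableSet_setOfPred.2 (.forall fun i => ?_))
    (measurable_select S hU)
  exact .iff (measurableSet_setOfPred.1 (measurable_pi_apply i hA)) measurable_const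

lemma measurable_map {T : E → F} (hT : Measurable T) :
    Measurable (map T : Sample E → Sample F) :=
  measurable_sigma fun n => (measurableEmbedding_sigmaMk n).measurable.comp
    (measurable_pi_lambda _ fun i => hT.comp (measurable_pi_apply i))

end Sample

section PoissonSample

variable {E F : Type*} [MeasurableSpace E] [MeasurableSpace F]

/-- The law of a Poisson point sample with intensity measure `Λ`, namely
`exp (-Λ E) • ∑ₙ (1 / n!) • Λ^{⊗ n}`. For `Λ = N • μ` with `μ` a probability measure this is the law
of `Poisson(N)` many independent points with distribution `μ`. -/
noncomputable def poissonSample (Λ : Measure E) : Measure (Sample E) :=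
  ENNReal.ofReal (Real.exp (-Λ.real Set.univ)) • Measure.sum fun n : ℕ =>
    (n ! : ℝ≥0∞)⁻¹ • (Measure.pi fun _ : Fin n => Λ).map (Sigma.mk n)

lemma lintegral_poissonSample (Λ : Measure E) (f : Sample E → ℝ≥0∞) :
    ∫⁻ s, f s ∂poissonSample Λ = ENNReal.ofReal (Real.exp (-Λ.real Set.univ)) *
      ∑' n : ℕ, (n ! : ℝ≥0∞)⁻¹ * ∫⁻ x, f ⟨n, x⟩ ∂Measure.pi fun _ => Λ := by
  rw [poissonSample, lintegral_smul_measure, lintegral_sum_measure, smul_eq_mul]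
  simp_rw [lintegral_smul_measure, (measurableEmbedding_sigmaMk _).lintegral_map, smul_eq_mul]

lemma lintegral_poissonMeasure (r : ℝ≥0) (f : ℕ → ℝ≥0∞) :
    ∫⁻ n, f n ∂poissonMeasure r =
      ENNReal.ofReal (Real.exp (-r)) * ∑' n : ℕ, (n ! : ℝ≥0∞)⁻¹ * ((r : ℝ≥0∞) ^ n * f n) := by
  rw [poissonMeasure, lintegral_sum_measure, ← ENNReal.tsum_mul_left]
  refine tsum_congr fun n => ?_
  rw [lintegral_smul_measure, lintegral_dirac, smul_eq_mul, mul_div_assoc, div_eq_inv_mul,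
    ENNReal.ofReal_mul (by positivity), ENNReal.ofReal_mul (by positivity),
    ENNReal.ofReal_inv_of_pos (by positivity), ENNReal.ofReal_natCast,
    ENNReal.ofReal_pow r.coe_nonneg, ENNReal.ofReal_coe_nnreal, mul_assoc, mul_assoc]

lemma map_fst_poissonSample (Λ : Measure E) [IsFiniteMeasure Λ] :
    (poissonSample Λ).map Sigma.fst = poissonMeasure (Λ Set.univ).toNNReal := by
  refine Measure.ext_of_lintegral _ fun f hf => ?_
  rw [lintegral_map hf Sample.measurable_fst, lintegral_poissonSample, lintegral_poissonMeasure,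
    ENNReal.coe_toNNReal (measure_ne_top _ _)]
  simp [Measure.real, mul_comm, ENNReal.coe_toNNReal_eq_toReal, Measure.pi_univ]

instance isProbabilityMeasure_poissonSample (Λ : Measure E) [IsFiniteMeasure Λ] :
    IsProbabilityMeasure (poissonSample Λ) := by
  rw [← Measure.isProbabilityMeasure_map_iff Sample.measurable_fst.aemeasurable,
    map_fst_poissonSample]
  infer_instance

lemma ae_poissonSample {Λ : Measure E} [SigmaFinite Λ] {p : E → Prop} (h : ∀ᵐ x ∂Λ, p x) :
    ∀ᵐ s ∂poissonSample Λ, ∀ i, p (s.2 i) := by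
  refine Measure.ae_smul_measure (Measure.ae_sum_iff.2 fun n => Measure.ae_smul_measure ?_ _) _
  rw [(measurableEmbedding_sigmaMk n).ae_map_iff]
  exact ae_all_iff.2 fun i =>
    (Measure.tendsto_eval_ae_ae (μ := fun _ : Fin n => Λ) (i := i)).eventually h

lemma ae_poissonSample_prod {Λ : Measure E} [IsFiniteMeasure Λ]
    {p : E → Prop} (h : ∀ᵐ x ∂Λ, p x) :
    ∀ᵐ q ∂(poissonSample Λ).prod (poissonSample Λ), (∀ i, p (q.1.2 i)) ∧ ∀ j, p (q.2.2 j) :=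
  (Measure.quasiMeasurePreserving_fst.ae (ae_poissonSample h)).and
    (Measure.quasiMeasurePreserving_snd.ae (ae_poissonSample h))

lemma map_poissonSample {Λ : Measure E} [IsFiniteMeasure Λ] {T : E → F} (hT : Measurable T) :
    (poissonSample Λ).map (Sample.map T) = poissonSample (Λ.map T) := by
  refine Measure.ext_of_lintegral _ fun f hf => ?_
  have hpi (n : ℕ) : Measure.pi (fun _ : Fin n => Λ.map T) = (Measure.pi fun _ : Fin n => Λ).map
      fun x i => T (x i) := (Measure.pi_map_pi fun _ => hT.aemeasurable).symm
  rw [lintegral_map hf (Sample.measurable_map hT), lintegral_poissonSample, lintegral_poissonSample,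
    map_measureReal_apply hT .univ, Set.preimage_univ]
  congr! 4 with n
  rw [hpi, lintegral_map (f := fun x => f ⟨n, x⟩)
    (hf.comp (measurableEmbedding_sigmaMk n).measurable) (by fun_prop)]
  rfl

lemma lintegral_pi_comp_select (Λ : Measure E) [IsFiniteMeasure Λ] {A : Set E}
    {n : ℕ} (S : Finset (Fin n)) {f : Sample E → ℝ≥0∞} (hf : Measurable f) :
    ∫⁻ x, f (Sample.select ⟨n, x⟩ S)
        ∂Measure.pi (fun i => if i ∈ S then Λ.restrict A else Λ.restrict Aᶜ) =
      Λ Aᶜ ^ (n - S.card) * ∫⁻ y, f ⟨S.card, y⟩ ∂Measure.pi fun _ => Λ.restrict A := by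
  have hfin (i : Fin n) : IsFiniteMeasure (if i ∈ S then Λ.restrict A else Λ.restrict Aᶜ) := by
    split_ifs <;> infer_instance
  have hmap := map_comp_pi (fun i => if i ∈ S then Λ.restrict A else Λ.restrict Aᶜ) (· ∈ S)
    (S.orderIsoOfFin rfl).toEquiv
  simp only [RelIso.coe_fn_toEquiv, Finset.coe_mem, if_true] at hmap
  rw [Finset.prod_congr rfl fun i _ => by rw [if_neg i.2, Measure.restrict_apply_univ],
    Finset.prod_const, Finset.card_univ, Fintype.card_subtype_compl, Fintype.card_fin,
    Fintype.card_coe] at hmap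
  rw [← smul_eq_mul, ← lintegral_smul_measure, ← hmap,
    lintegral_map (f := fun y => f ⟨S.card, y⟩)
      (hf.comp (measurableEmbedding_sigmaMk S.card).measurable) (by fun_prop)]
  rfl

lemma lintegral_pi_comp_restrict (Λ : Measure E) [IsFiniteMeasure Λ] {A : Set E}
    (hA : MeasurableSet A) (n : ℕ) {f : Sample E → ℝ≥0∞} (hf : Measurable f) :
    ∫⁻ x, f (Sample.restrict A ⟨n, x⟩) ∂Measure.pi (fun _ => Λ) =
      ∑ k ∈ Finset.range (n + 1), n.choose k * (Λ Aᶜ ^ (n - k) *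
        ∫⁻ y, f ⟨k, y⟩ ∂Measure.pi fun _ => Λ.restrict A) := by
  have hfin (S : Finset (Fin n)) (i : Fin n) :
      IsFiniteMeasure (if i ∈ S then Λ.restrict A else Λ.restrict Aᶜ) := by
    split_ifs <;> infer_instance
  have hselect (S : Finset (Fin n)) :
      ∀ᵐ x ∂Measure.pi (fun i => if i ∈ S then Λ.restrict A else Λ.restrict Aᶜ),
        Sample.restrict A ⟨n, x⟩ = Sample.select ⟨n, x⟩ S := by
    have hmem (i : Fin n) :
        ∀ᵐ z ∂(if i ∈ S then Λ.restrict A else Λ.restrict Aᶜ), z ∈ A ↔ i ∈ S := by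
      split_ifs with hi
      · filter_upwards [ae_restrict_mem hA] with z hz using by simp [hz, hi]
      · filter_upwards [ae_restrict_mem hA.compl] with z hz using by simpa [hi] using hz
    filter_upwards [ae_all_iff.2 fun i => Measure.tendsto_eval_ae_ae.eventually (hmem i)] with x hx
    exact Sample.restrict_eq_select hx
  rw [pi_eq_sum_pi_restrict (fun _ => Λ) fun _ => hA, lintegral_finsetSum_measure,
    ← Finset.powerset_univ]
  simp_rw [lintegral_congr_ae ((hselect _).mono fun _ hx => congrArg f hx),
    lintegral_pi_comp_select Λ _ hf]
  rw [Finset.sum_powerset_apply_card (fun k => Λ Aᶜ ^ (n - k) *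
    ∫⁻ y, f ⟨k, y⟩ ∂Measure.pi fun _ => Λ.restrict A)]
  simp only [Finset.card_univ, Fintype.card_fin, nsmul_eq_mul]

lemma tsum_sum_range_eq_tsum_tsum (f : ℕ → ℕ → ℝ≥0∞) :
    ∑' n, ∑ k ∈ Finset.range (n + 1), f k (n - k) = ∑' k, ∑' l, f k l := by
  rw [← ENNReal.tsum_prod, ← Finset.HasAntidiagonal.sigmaAntidiagonalEquivProd.tsum_eq,
    ENNReal.tsum_sigma']
  refine tsum_congr fun n => ?_
  rw [tsum_fintype, ← Finset.Nat.sum_antidiagonal_eq_sum_range_succ f,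
    ← Finset.sum_coe_sort (Finset.HasAntidiagonal.antidiagonal n)]
  rfl

lemma inv_factorial_mul_choose {n k : ℕ} (hk : k ≤ n) :
    (n ! : ℝ≥0∞)⁻¹ * n.choose k = (k ! : ℝ≥0∞)⁻¹ * ((n - k)! : ℝ≥0∞)⁻¹ := by
  have hn (n : ℕ) : (n ! : ℝ≥0∞) ≠ 0 := by exact_mod_cast n.factorial_ne_zero
  have hn' (n : ℕ) : (n ! : ℝ≥0∞) ≠ ∞ := ENNReal.natCast_ne_top _
  rw [← ENNReal.mul_inv (.inl (hn k)) (.inl (hn' k)), mul_comm]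
  refine ENNReal.eq_inv_of_mul_eq_one_left ?_
  rw [mul_right_comm, ← Nat.cast_mul, ← Nat.cast_mul, ← mul_assoc,
    Nat.choose_mul_factorial_mul_factorial hk, ENNReal.mul_inv_cancel (hn n) (hn' n)]

/-- The thinning property of Poisson samples. -/
lemma map_restrict_poissonSample (Λ : Measure E) [IsFiniteMeasure Λ] {A : Set E}
    (hA : MeasurableSet A) :
    (poissonSample Λ).map (Sample.restrict A) = poissonSample (Λ.restrict A) := by
  refine Measure.ext_of_lintegral _ fun f hf => ?_
  rw [lintegral_map hf (Sample.measurable_restrict hA), lintegral_poissonSample,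
    lintegral_poissonSample]
  set I : ℕ → ℝ≥0∞ := fun k => ∫⁻ y, f ⟨k, y⟩ ∂Measure.pi fun _ => Λ.restrict A
  have hsplit (n : ℕ) : (n ! : ℝ≥0∞)⁻¹ *
      ∫⁻ x, f (Sample.restrict A ⟨n, x⟩) ∂Measure.pi (fun _ => Λ) =
        ∑ k ∈ Finset.range (n + 1),
          (k ! : ℝ≥0∞)⁻¹ * I k * (((n - k)! : ℝ≥0∞)⁻¹ * Λ Aᶜ ^ (n - k)) := by
    rw [lintegral_pi_comp_restrict Λ hA n hf, Finset.mul_sum]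
    refine Finset.sum_congr rfl fun k hk => ?_
    rw [← mul_assoc, inv_factorial_mul_choose (Finset.mem_range_succ_iff.1 hk)]
    ring
  have hexp : ENNReal.ofReal (Real.exp (-Λ.real Set.univ)) =
      ENNReal.ofReal (Real.exp (-(Λ.restrict A).real Set.univ)) *
        ENNReal.ofReal (Real.exp (-(Λ Aᶜ).toNNReal)) := by
    rw [← ENNReal.ofReal_mul (by positivity), ← Real.exp_add,
      ← measureReal_add_measureReal_compl hA, measureReal_restrict_apply_univ, neg_add]
    rfl
  have hcompl := lintegral_poissonMeasure (Λ Aᶜ).toNNReal 1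
  simp only [Pi.one_apply, lintegral_one, measure_univ, mul_one,
    ENNReal.coe_toNNReal (measure_ne_top _ _)] at hcompl
  simp_rw [hsplit]
  rw [tsum_sum_range_eq_tsum_tsum fun k l =>
    (k ! : ℝ≥0∞)⁻¹ * I k * ((l ! : ℝ≥0∞)⁻¹ * Λ Aᶜ ^ l)]
  simp_rw [ENNReal.tsum_mul_left, ENNReal.tsum_mul_right]
  rw [hexp, mul_assoc, mul_left_comm _ (tsum _), ← hcompl, mul_one]

lemma measurePreserving_restrict_prod (Λ : Measure E)
    [IsFiniteMeasure Λ] {A : Set E} (hA : MeasurableSet A) :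
    MeasurePreserving (Prod.map (Sample.restrict A) (Sample.restrict A))
      ((poissonSample Λ).prod (poissonSample Λ))
      ((poissonSample (Λ.restrict A)).prod (poissonSample (Λ.restrict A))) :=
  have h : MeasurePreserving (Sample.restrict A) (poissonSample Λ) (poissonSample (Λ.restrict A)) :=
    ⟨Sample.measurable_restrict hA, map_restrict_poissonSample Λ hA⟩
  h.prod h

end PoissonSample

section PoissonVariance

lemma integral_abs_sub_prod_le_sqrt_variance {Ω : Type*} [MeasurableSpace Ω] {μ : Measure Ω}
    [IsProbabilityMeasure μ] {X : Ω → ℝ} (hX : MemLp X 2 μ) :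
    ∫ p, |X p.1 - X p.2| ∂μ.prod μ ≤ √(2 * Var[X; μ]) := by
  have hfst : MemLp (fun p : Ω × Ω => X p.1) 2 (μ.prod μ) := hX.comp_fst μ
  have hsnd : MemLp (fun p : Ω × Ω => X p.2) 2 (μ.prod μ) := hX.comp_snd μ
  have hsub : MemLp (fun p : Ω × Ω => X p.1 - X p.2) 2 (μ.prod μ) := hfst.sub hsnd
  have habs : MemLp (fun p : Ω × Ω => |X p.1 - X p.2|) 2 (μ.prod μ) := hsub.abs
  have hmean : ∫ p, (X p.1 - X p.2) ∂μ.prod μ = 0 := by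
    rw [integral_sub (hfst.integrable one_le_two) (hsnd.integrable one_le_two),
      integral_fun_fst X, integral_fun_snd X, sub_self]
  have hvar : ∫ p, (X p.1 - X p.2) ^ 2 ∂μ.prod μ = 2 * Var[X; μ] := by
    have hprod := variance_add_prod hX hX.neg
    simp only [Pi.neg_apply, ← sub_eq_add_neg, variance_neg] at hprod
    rw [← variance_of_integral_eq_zero hsub.aemeasurable hmean, hprod, two_mul]
  refine Real.le_sqrt_of_sq_le ?_
  have h := variance_nonneg (fun p : Ω × Ω => |X p.1 - X p.2|) (μ.prod μ)
  rw [variance_eq_sub habs] at h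
  simp only [Pi.pow_apply, sq_abs] at h
  linarith

lemma lintegral_natCast_mul_poissonMeasure (r : ℝ≥0) (f : ℕ → ℝ≥0∞) :
    ∫⁻ n, n * f n ∂poissonMeasure r = r * ∫⁻ n, f (n + 1) ∂poissonMeasure r := by
  have hterm (n : ℕ) : ((n + 1)! : ℝ≥0∞)⁻¹ * (r ^ (n + 1) * ((n + 1 : ℕ) * f (n + 1))) =
      r * ((n ! : ℝ≥0∞)⁻¹ * (r ^ n * f (n + 1))) := by
    have hcancel : ((n + 1 : ℕ) : ℝ≥0∞)⁻¹ * (n + 1 : ℕ) = 1 :=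
      ENNReal.inv_mul_cancel (by simp) (ENNReal.natCast_ne_top _)
    rw [Nat.factorial_succ, Nat.cast_mul, ENNReal.mul_inv (by simp) (by simp)]
    calc _ = ((n + 1 : ℕ) : ℝ≥0∞)⁻¹ * (n + 1 : ℕ) * (r * ((n ! : ℝ≥0∞)⁻¹ * (r ^ n * f (n + 1)))) :=
          by ring
      _ = _ := by rw [hcancel, one_mul]
  rw [lintegral_poissonMeasure, lintegral_poissonMeasure, tsum_eq_zero_add' ENNReal.summable]
  simp only [Nat.cast_zero, zero_mul, mul_zero, zero_add, hterm, ENNReal.tsum_mul_left]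
  rw [mul_left_comm]

lemma lintegral_natCast_poissonMeasure (r : ℝ≥0) : ∫⁻ n, (n : ℝ≥0∞) ∂poissonMeasure r = r := by
  simpa using lintegral_natCast_mul_poissonMeasure r 1

lemma lintegral_natCast_sq_poissonMeasure (r : ℝ≥0) :
    ∫⁻ n, (n : ℝ≥0∞) ^ 2 ∂poissonMeasure r = r * (r + 1) := by
  simp_rw [sq]
  rw [lintegral_natCast_mul_poissonMeasure]
  simp [lintegral_add_right, lintegral_natCast_poissonMeasure]

lemma memLp_natCast_poissonMeasure (r : ℝ≥0) :
    MemLp (Nat.cast : ℕ → ℝ) 2 (poissonMeasure r) := by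
  rw [memLp_two_iff_integrable_sq .of_discrete]
  refine ⟨.of_discrete, ?_⟩
  rw [hasFiniteIntegral_iff_enorm]
  simp only [enorm_pow, Real.enorm_natCast, lintegral_natCast_sq_poissonMeasure]
  finiteness

lemma variance_natCast_poissonMeasure (r : ℝ≥0) :
    Var[(Nat.cast : ℕ → ℝ); poissonMeasure r] = r := by
  have hmean : ∫ n, (n : ℝ) ∂poissonMeasure r = r := by
    rw [integral_eq_lintegral_of_nonneg_ae (.of_forall fun n => n.cast_nonneg) .of_discrete]
    simp [lintegral_natCast_poissonMeasure]
  have hsq : ∫ n, (n : ℝ) ^ 2 ∂poissonMeasure r = r * (r + 1) := by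
    rw [integral_eq_lintegral_of_nonneg_ae (.of_forall fun n => by positivity) .of_discrete]
    simp [ENNReal.ofReal_pow, lintegral_natCast_sq_poissonMeasure, ENNReal.toReal_add]
  rw [variance_eq_sub (memLp_natCast_poissonMeasure r)]
  simp only [Pi.pow_apply, hmean, hsq]
  ring

end PoissonVariance

section SampleSize

variable {E : Type*} [MeasurableSpace E] (Λ : Measure E) [IsFiniteMeasure Λ]

lemma memLp_size_poissonSample : MemLp (fun s : Sample E => (s.1 : ℝ)) 2 (poissonSample Λ) := by
  have h := memLp_natCast_poissonMeasure (Λ Set.univ).toNNReal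
  rw [← map_fst_poissonSample, memLp_map_measure_iff .of_discrete
    Sample.measurable_fst.aemeasurable] at h
  exact h

lemma integrable_abs_size_sub_size :
    Integrable (fun p : Sample E × Sample E => |(p.1.1 : ℝ) - p.2.1|)
      ((poissonSample Λ).prod (poissonSample Λ)) :=
  have h := (memLp_size_poissonSample Λ).integrable one_le_two
  ((h.comp_fst _).sub (h.comp_snd _)).abs

lemma variance_size_poissonSample :
    Var[fun s : Sample E => (s.1 : ℝ); poissonSample Λ] = Λ.real Set.univ := by
  rw [Measure.real, ← ENNReal.coe_toNNReal_eq_toReal, ← variance_natCast_poissonMeasure,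
    ← map_fst_poissonSample, variance_map .of_discrete Sample.measurable_fst.aemeasurable]
  rfl

lemma integral_abs_size_sub_size_le :
    ∫ p, |(p.1.1 : ℝ) - p.2.1| ∂(poissonSample Λ).prod (poissonSample Λ) ≤
      √(2 * Λ.real Set.univ) :=
  variance_size_poissonSample Λ ▸
    integral_abs_sub_prod_le_sqrt_variance (memLp_size_poissonSample Λ)

end SampleSize

section MeanMatching

variable {d : ℕ}

/-- The expected length of a minimum bipartite matching between two independent Poisson samples with
intensity measure `Λ`. -/
noncomputable def meanMatching (Λ : Measure (EuclideanSpace ℝ (Fin d))) : ℝ :=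
  ∫ p, LMBM p.1.2 p.2.2 ∂(poissonSample Λ).prod (poissonSample Λ)

lemma measurable_LMBM_sample :
    Measurable fun p : Sample (EuclideanSpace ℝ (Fin d)) × Sample (EuclideanSpace ℝ (Fin d)) =>
      LMBM p.1.2 p.2.2 :=
  measurable_sigma_prod fun _ _ => measurable_LMBM

variable {Λ : Measure (EuclideanSpace ℝ (Fin d))} [IsFiniteMeasure Λ]
  {s : Set (EuclideanSpace ℝ (Fin d))} {D : ℝ}

lemma integrable_LMBM_sample (hD : 0 ≤ D) (hs : ∀ x ∈ s, ∀ y ∈ s, dist x y ≤ D)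
    (hΛ : ∀ᵐ x ∂Λ, x ∈ s) :
    Integrable (fun p => LMBM p.1.2 p.2.2) ((poissonSample Λ).prod (poissonSample Λ)) := by
  have hsize := (memLp_size_poissonSample Λ).integrable one_le_two
  refine ((hsize.comp_fst (poissonSample Λ)).mul_const D).mono'
    measurable_LMBM_sample.aestronglyMeasurable ?_
  filter_upwards [ae_poissonSample_prod hΛ] with p hp
  rw [Real.norm_of_nonneg (LMBM_nonneg _ _)]
  exact LMBM_le_card_mul hD fun i j => hs _ (hp.1 i) _ (hp.2 j)

lemma meanMatching_map
    {T : EuclideanSpace ℝ (Fin d) → EuclideanSpace ℝ (Fin d)} (hT : Measurable T) {c : ℝ}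
    (hc : 0 ≤ c) (hdist : ∀ x y, dist (T x) (T y) = c * dist x y) :
    meanMatching (Λ.map T) = c * meanMatching Λ := by
  have hmap := Sample.measurable_map hT
  rw [meanMatching, meanMatching, ← map_poissonSample hT, Measure.map_prod_map _ _ hmap hmap,
    integral_map (hmap.prodMap hmap).aemeasurable measurable_LMBM_sample.aestronglyMeasurable,
    ← integral_const_mul]
  exact integral_congr_ae (.of_forall fun p => LMBM_eq_mul hc fun i j => hdist _ _)

lemma LMBM_le_sum_restrict {ι : Type*} {f : EuclideanSpace ℝ (Fin d) → ι} {t : Finset ι}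
    {S S' : Sample (EuclideanSpace ℝ (Fin d))} (hD : 0 ≤ D)
    (hdist : ∀ i j, dist (S.2 i) (S'.2 j) ≤ D) (hS : ∀ i, f (S.2 i) ∈ t)
    (hS' : ∀ j, f (S'.2 j) ∈ t) :
    LMBM S.2 S'.2 ≤ ∑ i ∈ t,
      (LMBM (S.restrict (f ⁻¹' {i})).2 (S'.restrict (f ⁻¹' {i})).2 +
        D / 2 * |((S.restrict (f ⁻¹' {i})).1 : ℝ) - (S'.restrict (f ⁻¹' {i})).1|) := by
  classical
  have hselect (R : Sample (EuclideanSpace ℝ (Fin d))) (i : ι) :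
      R.restrict (f ⁻¹' {i}) = R.select {a | f (R.2 a) = i} :=
    Sample.restrict_eq_select fun a => by simp
  refine (LMBMon_le_sum_fiber (f := fun a => f (S.2 a)) (g := fun b => f (S'.2 b)) hD hdist
    (fun a _ => hS a) fun b _ => hS' b).trans (Finset.sum_le_sum fun i _ => ?_)
  rw [hselect, hselect]
  refine add_le_add_left ?_ _
  have h := LMBMon_map_univ_le S.2 S'.2
    (Finset.orderEmbOfFin {a | f (S.2 a) = i} rfl).toEmbedding
    (Finset.orderEmbOfFin {b | f (S'.2 b) = i} rfl).toEmbedding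
  rw [Finset.map_orderEmbOfFin_univ, Finset.map_orderEmbOfFin_univ] at h
  exact h

lemma meanMatching_le_sum_fiber {ι : Type*} {f : EuclideanSpace ℝ (Fin d) → ι}
    (hf : ∀ i, MeasurableSet (f ⁻¹' {i})) {t : Finset ι} (hD : 0 ≤ D)
    (hs : ∀ x ∈ s, ∀ y ∈ s, dist x y ≤ D) (hΛs : ∀ᵐ x ∂Λ, x ∈ s) (hΛt : ∀ᵐ x ∂Λ, f x ∈ t) :
    meanMatching Λ ≤ ∑ i ∈ t, (meanMatching (Λ.restrict (f ⁻¹' {i})) +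
      D / 2 * √(2 * Λ.real (f ⁻¹' {i}))) := by
  let cost (q : Sample (EuclideanSpace ℝ (Fin d)) × Sample (EuclideanSpace ℝ (Fin d))) : ℝ :=
    LMBM q.1.2 q.2.2 + D / 2 * |(q.1.1 : ℝ) - q.2.1|
  let subsamples (i : ι) := Prod.map (Sample.restrict (f ⁻¹' {i})) (Sample.restrict (f ⁻¹' {i}))
  have hpres (i : ι) := measurePreserving_restrict_prod Λ (hf i)
  have hmatch (i : ι) := integrable_LMBM_sample (Λ := Λ.restrict (f ⁻¹' {i})) hD hs
    (ae_restrict_of_ae hΛs)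
  have hexcess (i : ι) := (integrable_abs_size_sub_size (Λ.restrict (f ⁻¹' {i}))).const_mul
    (D / 2)
  have hcost (i : ι) : Integrable cost ((poissonSample (Λ.restrict (f ⁻¹' {i}))).prod
      (poissonSample (Λ.restrict (f ⁻¹' {i})))) := (hmatch i).add (hexcess i)
  have hcost' (i : ι) : Integrable (fun p => cost (subsamples i p))
      ((poissonSample Λ).prod (poissonSample Λ)) :=
    (hpres i).integrable_comp_of_integrable (hcost i)
  calc meanMatching Λ
      ≤ ∫ p, ∑ i ∈ t, cost (subsamples i p) ∂(poissonSample Λ).prod (poissonSample Λ) := by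
        refine integral_mono_ae (integrable_LMBM_sample hD hs hΛs)
          (integrable_finsetSum _ fun i _ => hcost' i) ?_
        filter_upwards [ae_poissonSample_prod hΛs, ae_poissonSample_prod hΛt] with p hps hpt
        exact LMBM_le_sum_restrict hD (fun i j => hs _ (hps.1 i) _ (hps.2 j)) hpt.1 hpt.2
    _ = ∑ i ∈ t, ∫ q, cost q ∂(poissonSample (Λ.restrict (f ⁻¹' {i}))).prod
          (poissonSample (Λ.restrict (f ⁻¹' {i}))) := by
        rw [integral_finsetSum _ fun i _ => hcost' i]
        refine Finset.sum_congr rfl fun i _ => ?_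
        rw [← (hpres i).map_eq, integral_map (hpres i).aemeasurable
          ((hpres i).map_eq ▸ (hcost i).aestronglyMeasurable)]
    _ ≤ _ := by
        refine Finset.sum_le_sum fun i _ => ?_
        rw [integral_add (hmatch i) (hexcess i), integral_const_mul, meanMatching,
          ← measureReal_restrict_apply_univ]
        gcongr
        exact integral_abs_size_sub_size_le _

/-- The cost of merging the cells of a partition. -/
lemma sum_meanMatching_fiber_comp_le {ι κ : Type*} [Countable ι]
    {f : EuclideanSpace ℝ (Fin d) → ι} (hf : ∀ i, MeasurableSet (f ⁻¹' {i})) {g : ι → κ}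
    {t : Finset ι} {u : Finset κ} (hg : ∀ i ∈ t, g i ∈ u) (hΛ : ∀ᵐ x ∂Λ, f x ∈ t) (hD : 0 ≤ D)
    (hdist : ∀ x y, g (f x) = g (f y) → dist x y ≤ D) :
    ∑ k ∈ u, meanMatching (Λ.restrict (g ∘ f ⁻¹' {k})) ≤
      ∑ i ∈ t, (meanMatching (Λ.restrict (f ⁻¹' {i})) + D / 2 * √(2 * Λ.real (f ⁻¹' {i}))) := by
  classical
  rw [← Finset.sum_fiberwise_of_maps_to hg]
  refine Finset.sum_le_sum fun k _ => ?_
  have hmeas : MeasurableSet (g ∘ f ⁻¹' {k}) := by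
    rw [Set.preimage_comp, ← Set.biUnion_preimage_singleton]
    exact .biUnion (Set.to_countable _) fun i _ => hf i
  have hmem : ∀ᵐ x ∂Λ.restrict (g ∘ f ⁻¹' {k}), g (f x) = k := ae_restrict_mem hmeas
  refine (meanMatching_le_sum_fiber hf (t := {i ∈ t | g i = k}) hD
    (fun x hx y hy => hdist x y (hx.trans hy.symm)) hmem ?_).trans_eq ?_
  · filter_upwards [hmem, ae_restrict_of_ae hΛ] with x hxk hxt
    exact Finset.mem_filter.2 ⟨hxt, hxk⟩
  · refine Finset.sum_congr rfl fun i hi => ?_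
    have hsub : f ⁻¹' {i} ⊆ g ∘ f ⁻¹' {k} := by
      rintro x rfl
      exact (Finset.mem_filter.1 hi).2
    rw [Measure.restrict_restrict (hf i), Set.inter_eq_left.2 hsub,
      measureReal_restrict_apply (hf i), Set.inter_eq_left.2 hsub]

end MeanMatching

section Grid

variable {d : ℕ}

/-- The multi-index of the half-open cube of side `h`, in the grid of such cubes with a corner at
the origin, that contains a given point. -/
noncomputable def gridIndex (h : ℝ) (x : EuclideanSpace ℝ (Fin d)) : Fin d → ℤ :=
  fun i => ⌊x i / h⌋

/-- The half-open cube of side `h` with multi-index `b`. In particular `gridCell L 0` is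
`[0, L) ^ d`. -/
def gridCell (h : ℝ) (b : Fin d → ℤ) : Set (EuclideanSpace ℝ (Fin d)) :=
  gridIndex h ⁻¹' {b}

/-- The multi-indices of the cubes of side `h` that meet `[0, L) ^ d`. -/
noncomputable def gridIndices (d : ℕ) (L h : ℝ) : Finset (Fin d → ℤ) :=
  Fintype.piFinset fun _ => Finset.Ico 0 ⌈L / h⌉

lemma measurable_gridIndex (h : ℝ) : Measurable (gridIndex (d := d) h) :=
  measurable_pi_lambda _ fun i => Int.measurable_floor.comp (by fun_prop)

lemma measurableSet_gridCell (h : ℝ) (b : Fin d → ℤ) : MeasurableSet (gridCell h b) :=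
  measurable_gridIndex h (measurableSet_singleton b)

lemma mem_gridCell {h : ℝ} (hh : 0 < h) {b : Fin d → ℤ} {x : EuclideanSpace ℝ (Fin d)} :
    x ∈ gridCell h b ↔ ∀ i, x i ∈ Set.Ico (b i * h) ((b i + 1) * h) := by
  simp only [gridCell, gridIndex, Set.mem_preimage, Set.mem_singleton_iff, funext_iff,
    Int.floor_eq_iff, le_div_iff₀ hh, div_lt_iff₀ hh, Set.mem_Ico]

lemma mem_gridCell_zero {h : ℝ} (hh : 0 < h) {x : EuclideanSpace ℝ (Fin d)} :
    x ∈ gridCell h 0 ↔ ∀ i, x i ∈ Set.Ico 0 h := by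
  simp [mem_gridCell hh]

lemma gridIndex_two_mul (h : ℝ) :
    gridIndex (d := d) (2 * h) = (fun b => b / 2) ∘ gridIndex h := by
  ext x i
  have := Int.floor_div_natCast (x i / h) 2
  rw [div_div, mul_comm] at this
  exact_mod_cast this

lemma dist_le_of_gridIndex_eq {h : ℝ} (hh : 0 < h) {x y : EuclideanSpace ℝ (Fin d)}
    (hxy : gridIndex h x = gridIndex h y) : dist x y ≤ √d * h := by
  have hcoord (i : Fin d) : dist (x i) (y i) ≤ h := by
    have := Int.abs_sub_lt_one_of_floor_eq_floor (congrFun hxy i)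
    rw [← sub_div, abs_div, abs_of_pos hh, div_lt_one hh] at this
    exact this.le
  rw [EuclideanSpace.dist_eq]
  refine Real.sqrt_le_iff.2 ⟨by positivity, ?_⟩
  rw [mul_pow, Real.sq_sqrt d.cast_nonneg]
  calc ∑ i, dist (x i) (y i) ^ 2 ≤ ∑ _i : Fin d, h ^ 2 := by gcongr with i; exact hcoord i
    _ = d * h ^ 2 := by simp

lemma gridIndex_mem_gridIndices {L h : ℝ} (hL : 0 < L) (hh : 0 < h)
    {x : EuclideanSpace ℝ (Fin d)} (hx : x ∈ gridCell L 0) : gridIndex h x ∈ gridIndices d L h := by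
  refine Fintype.mem_piFinset.2 fun i => Finset.mem_Ico.2 ?_
  obtain ⟨h0, h1⟩ := (mem_gridCell_zero hL).1 hx i
  refine ⟨Int.floor_nonneg.2 (by positivity), Int.lt_ceil.2 ((Int.floor_le _).trans_lt ?_)⟩
  gcongr

lemma div_two_mem_gridIndices {L h : ℝ} {b : Fin d → ℤ} (hb : b ∈ gridIndices d L h) :
    b / 2 ∈ gridIndices d L (2 * h) := by
  refine Fintype.mem_piFinset.2 fun i => Finset.mem_Ico.2 ?_
  obtain ⟨h0, h1⟩ := Finset.mem_Ico.1 (Fintype.mem_piFinset.1 hb i)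
  have hdiv : (2 : ℝ) * (b i / 2 : ℤ) ≤ b i := by exact_mod_cast Int.mul_ediv_self_le two_ne_zero
  refine ⟨Int.ediv_nonneg h0 zero_le_two, Int.lt_ceil.2 ?_⟩
  rw [mul_comm, ← div_div, lt_div_iff₀ two_pos]
  change ((b i / 2 : ℤ) : ℝ) * 2 < L / h
  linarith [Int.lt_ceil.1 h1]

lemma card_gridIndices_le {L h : ℝ} (hh : 0 < h) (hL : h ≤ L) :
    ((gridIndices d L h).card : ℝ) ≤ (2 * L / h) ^ d := by
  have h1 : 1 ≤ L / h := (one_le_div hh).2 hL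
  have hceil : (⌈L / h⌉.toNat : ℝ) ≤ 2 * L / h := by
    rw [← Int.cast_natCast, Int.toNat_of_nonneg (Int.ceil_nonneg (by linarith)), mul_div_assoc]
    linarith [Int.ceil_lt_add_one (L / h)]
  calc ((gridIndices d L h).card : ℝ) = (⌈L / h⌉.toNat : ℝ) ^ d := by simp [gridIndices]
    _ ≤ (2 * L / h) ^ d := by gcongr

lemma gridIndices_eq_singleton_zero {L h : ℝ} (hL : 0 < L) (hh : L ≤ h) :
    gridIndices d L h = {0} := by
  have hceil : ⌈L / h⌉ = 1 := by
    rw [Int.ceil_eq_iff]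
    have : 0 < L / h := div_pos hL (hL.trans_le hh)
    exact ⟨by simpa, by simpa using div_le_one_of_le₀ hh (hL.trans_le hh).le⟩
  have hIco : Finset.Ico (0 : ℤ) 1 = {0} := rfl
  rw [gridIndices, hceil, hIco, Fintype.piFinset_singleton]
  rfl

lemma gridCell_zero_subset {L h : ℝ} (hL : 0 < L) (hh : L ≤ h) :
    gridCell L (0 : Fin d → ℤ) ⊆ gridCell h 0 := fun _ hx =>
  (mem_gridCell_zero (hL.trans_le hh)).2 fun i =>
    Set.Ico_subset_Ico_right hh ((mem_gridCell_zero hL).1 hx i)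

lemma card_gridIndices_one (d m : ℕ) : (gridIndices d m 1).card = m ^ d := by
  simp [gridIndices]

lemma gridCell_one_subset {m : ℕ} (hm : 0 < m) {b : Fin d → ℤ} (hb : b ∈ gridIndices d m 1) :
    gridCell 1 b ⊆ gridCell m 0 := by
  refine fun x hx => (mem_gridCell_zero (by exact_mod_cast hm)).2 fun i => ?_
  have hbi : (0 : ℝ) ≤ b i ∧ (b i : ℝ) + 1 ≤ m := by
    have := Finset.mem_Ico.1 (Fintype.mem_piFinset.1 hb i)
    simp only [div_one, Int.ceil_natCast] at this
    exact_mod_cast this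
  have hxi := (mem_gridCell one_pos).1 hx i
  simp only [mul_one] at hxi
  exact Set.Ico_subset_Ico hbi.1 hbi.2 hxi

lemma volume_gridCell {h : ℝ} (hh : 0 < h) (b : Fin d → ℤ) :
    volume (gridCell h b) = ENNReal.ofReal (h ^ d) := by
  have hbox : gridCell h b = WithLp.ofLp ⁻¹'
      Set.univ.pi fun i => Set.Ico (b i * h) ((b i + 1) * h) := by
    ext x
    simp only [mem_gridCell hh, Set.mem_preimage, Set.mem_univ_pi]
  rw [hbox, (PiLp.volume_preserving_ofLp (Fin d)).measure_preimage
    (MeasurableSet.univ_pi fun _ => measurableSet_Ico).nullMeasurableSet, Real.volume_pi_Ico]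
  simp only [add_mul, one_mul, add_sub_cancel_left, Finset.prod_const, Finset.card_univ,
    Fintype.card_fin, ENNReal.ofReal_pow hh.le]

lemma isFiniteMeasure_restrict_gridCell {h : ℝ} (hh : 0 < h) (b : Fin d → ℤ) :
    IsFiniteMeasure (volume.restrict (gridCell h b)) :=
  isFiniteMeasure_restrict.2 (by simp [volume_gridCell hh])

lemma unifCube_eq_restrict_gridCell (d : ℕ) : unifCube d = volume.restrict (gridCell 1 0) := by
  have hclosed : unitCube d = WithLp.ofLp ⁻¹' Set.Icc 0 1 := by
    ext x
    simp [unitCube, Pi.le_def, forall_and]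
  have hopen : gridCell 1 0 = WithLp.ofLp ⁻¹' Set.univ.pi fun _ : Fin d => Set.Ico (0 : ℝ) 1 := by
    ext x
    simp only [mem_gridCell_zero one_pos, Set.mem_preimage, Set.mem_univ_pi]
  rw [unifCube, hclosed, hopen]
  exact Measure.restrict_congr_set ((PiLp.volume_preserving_ofLp
    (Fin d)).quasiMeasurePreserving.preimage_ae_eq Measure.univ_pi_Ico_ae_eq_Icc).symm

instance isProbabilityMeasure_unifCube (d : ℕ) : IsProbabilityMeasure (unifCube d) :=
  ⟨by simp [unifCube_eq_restrict_gridCell, volume_gridCell]⟩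

lemma map_add_restrict_gridCell {h : ℝ} (hh : 0 < h) (b : Fin d → ℤ) :
    (volume.restrict (gridCell h 0)).map (· + WithLp.toLp 2 fun i => b i * h) =
      volume.restrict (gridCell h b) := by
  have hpre : (· + WithLp.toLp 2 fun i => b i * h) ⁻¹' gridCell h b = gridCell h 0 := by
    ext x
    simp [mem_gridCell hh, add_mul, add_comm (x.ofLp _)]
  rw [← hpre]
  exact ((measurePreserving_add_right volume _).restrict_preimage
    (measurableSet_gridCell h b)).map_eq

lemma restrict_gridCell_zero_eq_smul_map {L : ℝ≥0} (hL : 0 < L) :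
    volume.restrict (gridCell L 0) =
      L ^ d • (volume.restrict (gridCell (d := d) 1 0)).map ((L : ℝ) • ·) := by
  have hL' : (L : ℝ) ≠ 0 := by exact_mod_cast hL.ne'
  have hpre : ((L : ℝ) • · : EuclideanSpace ℝ (Fin d) → _) ⁻¹' gridCell L 0 = gridCell 1 0 := by
    ext x
    have (i : Fin d) : L * x i / L = x i / 1 := by field_simp
    simp [gridCell, gridIndex, funext_iff, this]
  have hscalar : (L : ℝ≥0∞) ^ d * ENNReal.ofReal |((L : ℝ) ^ d)⁻¹| = 1 := by
    rw [abs_of_nonneg (by positivity), ENNReal.ofReal_inv_of_pos (by positivity),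
      ENNReal.ofReal_pow L.coe_nonneg, ENNReal.ofReal_coe_nnreal]
    exact ENNReal.mul_inv_cancel (by simp [hL.ne']) (by simp)
  rw [← hpre, ← Measure.restrict_map (measurable_const_smul _) (measurableSet_gridCell L 0),
    Measure.map_addHaar_smul volume hL', Measure.restrict_smul, finrank_euclideanSpace_fin,
    ← Measure.coe_nnreal_smul, smul_smul, ENNReal.coe_pow, hscalar, one_smul]

end Grid

section Intensity

lemma poissonSample_smul {E : Type*} [MeasurableSpace E] (r : ℝ≥0) (μ : Measure E)
    [IsProbabilityMeasure μ] :
    poissonSample (r • μ) = .sum fun n : ℕ => Real.toNNReal (Real.exp (-r) * r ^ n / n !) •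
      (Measure.pi fun _ : Fin n => μ).map (Sigma.mk n) := by
  refine Measure.ext_of_lintegral _ fun f _ => ?_
  have hweight (n : ℕ) : ((Real.toNNReal (Real.exp (-r) * r ^ n / n !) : ℝ≥0) : ℝ≥0∞) =
      ENNReal.ofReal (Real.exp (-r)) * ((n ! : ℝ≥0∞)⁻¹ * (r : ℝ≥0∞) ^ n) := by
    rw [← ENNReal.ofReal, mul_div_assoc, ENNReal.ofReal_mul (by positivity), div_eq_inv_mul,
      ENNReal.ofReal_mul (by positivity), ENNReal.ofReal_inv_of_pos (by positivity),
      ENNReal.ofReal_natCast, ENNReal.ofReal_pow r.coe_nonneg, ENNReal.ofReal_coe_nnreal]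
  rw [lintegral_poissonSample, lintegral_sum_measure, ← ENNReal.tsum_mul_left,
    measureReal_nnreal_smul_apply, probReal_univ, mul_one]
  refine tsum_congr fun n => ?_
  rw [pi_const_smul, Fintype.card_fin, lintegral_smul_measure, lintegral_smul_measure,
    (measurableEmbedding_sigmaMk n).lintegral_map, ENNReal.smul_def, ENNReal.smul_def,
    smul_eq_mul, smul_eq_mul, hweight, ENNReal.coe_pow, mul_assoc, mul_assoc]

lemma integral_poissonSample_smul_prod {E : Type*} [MeasurableSpace E] (r : ℝ≥0) (μ : Measure E)
    [IsProbabilityMeasure μ] {F : Sample E × Sample E → ℝ}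
    (hF : Integrable F ((poissonSample (r • μ)).prod (poissonSample (r • μ)))) :
    ∫ p, F p ∂(poissonSample (r • μ)).prod (poissonSample (r • μ)) =
      ∑' (n₁ : ℕ) (n₂ : ℕ), (Real.exp (-r) * r ^ n₁ / n₁ !) * ((Real.exp (-r) * r ^ n₂ / n₂ !) *
        ∫ p, F (⟨n₁, p.1⟩, ⟨n₂, p.2⟩)
          ∂(Measure.pi fun _ : Fin n₁ => μ).prod (Measure.pi fun _ : Fin n₂ => μ)) := by
  have hmk (n : ℕ) := measurableEmbedding_sigmaMk (β := fun n => Fin n → E) n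
  rw [poissonSample_smul, Measure.prod_sum_left] at hF ⊢
  simp_rw [Measure.prod_sum_right] at hF ⊢
  rw [integral_sum_measure hF]
  refine tsum_congr fun n₁ => ?_
  rw [integral_sum_measure (hF.mono_measure (Measure.le_sum _ n₁))]
  refine tsum_congr fun n₂ => ?_
  rw [Measure.prod_smul_left, Measure.prod_smul_right, Measure.map_prod_map _ _ (hmk n₁).measurable
    (hmk n₂).measurable, integral_smul_nnreal_measure, integral_smul_nnreal_measure,
    ((hmk n₁).prodMap (hmk n₂)).integral_map, NNReal.smul_def, NNReal.smul_def,
    Real.coe_toNNReal _ (by positivity), Real.coe_toNNReal _ (by positivity)]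
  rfl

lemma MP_eq_meanMatching (d : ℕ) (r : ℝ≥0) : MP d r = meanMatching (r • unifCube d) := by
  rw [meanMatching, integral_poissonSample_smul_prod, MP]
  have hΛ : ∀ᵐ x ∂r • unifCube d, x ∈ gridCell 1 0 := by
    rw [unifCube_eq_restrict_gridCell]
    exact Measure.ae_smul_measure (ae_restrict_mem (measurableSet_gridCell 1 0)) r
  exact integrable_LMBM_sample (by positivity)
    (fun x hx y hy => dist_le_of_gridIndex_eq one_pos (hx.trans hy.symm)) hΛ

lemma meanMatching_smul_restrict_gridCell {d : ℕ} (r : ℝ≥0) {L : ℝ≥0} (hL : 0 < L) :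
    meanMatching (r • volume.restrict (gridCell (d := d) L 0)) = L * MP d (L ^ d * r) := by
  have hscale : (r • volume.restrict (gridCell L 0) : Measure (EuclideanSpace ℝ (Fin d))) =
      ((L ^ d * r) • unifCube d).map ((L : ℝ) • ·) := by
    rw [restrict_gridCell_zero_eq_smul_map hL, unifCube_eq_restrict_gridCell, Measure.map_smul,
      smul_smul, mul_comm]
  have hdist (x y : EuclideanSpace ℝ (Fin d)) :
      dist ((L : ℝ) • x) ((L : ℝ) • y) = L * dist x y := by
    rw [dist_smul₀, NNReal.norm_eq]
  rw [hscale, meanMatching_map (measurable_const_smul _) L.coe_nonneg hdist,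
    ← MP_eq_meanMatching, NNReal.coe_mul, NNReal.coe_pow]

end Intensity

section DyadicMerging

variable {d : ℕ}

/-- The total of the mean matching lengths inside the cells of side `h` that meet `[0, L) ^ d`. -/
noncomputable def gridMatching (Λ : Measure (EuclideanSpace ℝ (Fin d))) (L h : ℝ) : ℝ :=
  ∑ b ∈ gridIndices d L h, meanMatching (Λ.restrict (gridCell h b))

lemma gridMatching_eq_meanMatching {Λ : Measure (EuclideanSpace ℝ (Fin d))} {L h : ℝ}
    (hL : 0 < L) (hh : L ≤ h) (hΛ : ∀ᵐ x ∂Λ, x ∈ gridCell L 0) :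
    gridMatching Λ L h = meanMatching Λ := by
  rw [gridMatching, gridIndices_eq_singleton_zero hL hh, Finset.sum_singleton,
    Measure.restrict_eq_self_of_ae_mem (hΛ.mono fun _ hx => gridCell_zero_subset hL hh hx)]

lemma gridMatching_one (r : ℝ≥0) {m : ℕ} (hm : 0 < m) :
    gridMatching (r • volume.restrict (gridCell (d := d) m 0)) m 1 = m ^ d * MP d r := by
  have hcell (b : Fin d → ℤ) (hb : b ∈ gridIndices d m 1) :
      meanMatching ((r • volume.restrict (gridCell (d := d) m 0)).restrict (gridCell 1 b)) =
        MP d r := by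
    rw [Measure.restrict_smul, Measure.restrict_restrict (measurableSet_gridCell 1 b),
      Set.inter_eq_left.2 (gridCell_one_subset hm hb), ← map_add_restrict_gridCell one_pos,
      ← unifCube_eq_restrict_gridCell, ← Measure.map_smul,
      meanMatching_map (measurable_add_const _) zero_le_one fun x y => by
        rw [dist_add_right, one_mul], one_mul, MP_eq_meanMatching]
  rw [gridMatching, Finset.sum_congr rfl hcell, Finset.sum_const, card_gridIndices_one,
    nsmul_eq_mul, Nat.cast_pow]

variable {Λ : Measure (EuclideanSpace ℝ (Fin d))} {r : ℝ≥0} {L h : ℝ}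

lemma measureReal_gridCell_le (hΛ : Λ ≤ r • volume) (hh : 0 < h) (b : Fin d → ℤ) :
    Λ.real (gridCell h b) ≤ r * h ^ d := by
  refine ENNReal.toReal_le_of_le_ofReal (by positivity) ((hΛ _).trans_eq ?_)
  rw [Measure.coe_nnreal_smul_apply, volume_gridCell hh, ENNReal.ofReal_mul r.coe_nonneg,
    ENNReal.ofReal_coe_nnreal]

variable [IsFiniteMeasure Λ]

lemma gridMatching_two_mul_le (hΛ : Λ ≤ r • volume) (hΛL : ∀ᵐ x ∂Λ, x ∈ gridCell L 0)
    (hh : 0 < h) (hL : h ≤ L) :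
    gridMatching Λ L (2 * h) ≤
      gridMatching Λ L h + (2 * L / h) ^ d * (√d * h * √(2 * (r * h ^ d))) := by
  have hmerge := sum_meanMatching_fiber_comp_le (Λ := Λ) (f := gridIndex h) (g := fun b => b / 2)
    (measurableSet_gridCell h) (t := gridIndices d L h) (fun _ => div_two_mem_gridIndices)
    (hΛL.mono fun _ => gridIndex_mem_gridIndices (hh.trans_le hL) hh)
    (D := √d * (2 * h)) (by positivity) fun x y hxy =>
      dist_le_of_gridIndex_eq (by positivity) (by rw [gridIndex_two_mul]; exact hxy)
  rw [← gridIndex_two_mul, Finset.sum_add_distrib] at hmerge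
  refine hmerge.trans (add_le_add_right ?_ _)
  calc ∑ b ∈ gridIndices d L h, √d * (2 * h) / 2 * √(2 * Λ.real (gridIndex h ⁻¹' {b}))
      ≤ ∑ _b ∈ gridIndices d L h, √d * h * √(2 * (r * h ^ d)) := by
        rw [mul_div_assoc, mul_div_cancel_left₀ h two_ne_zero]
        gcongr with b
        exact measureReal_gridCell_le hΛ hh b
    _ = (gridIndices d L h).card * (√d * h * √(2 * (r * h ^ d))) := by
        rw [Finset.sum_const, nsmul_eq_mul]
    _ ≤ (2 * L / h) ^ d * (√d * h * √(2 * (r * h ^ d))) := by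
        gcongr
        exact card_gridIndices_le hh hL

lemma gridMatching_two_pow_le (hΛ : Λ ≤ r • volume) (hΛL : ∀ᵐ x ∂Λ, x ∈ gridCell L 0) {J : ℕ}
    (hJ : ∀ j < J, 2 ^ j ≤ L) :
    gridMatching Λ L (2 ^ J) ≤ gridMatching Λ L 1 +
      ∑ j ∈ Finset.range J, (2 * L / 2 ^ j) ^ d * (√d * 2 ^ j * √(2 * (r * (2 ^ j) ^ d))) := by
  induction J with
  | zero => simp
  | succ J ih =>
    rw [pow_succ', Finset.sum_range_succ, ← add_assoc]
    exact (gridMatching_two_mul_le hΛ hΛL (by positivity) (hJ J J.lt_succ_self)).trans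
      (add_le_add_left (ih fun j hj => hJ j (hj.trans J.lt_succ_self)) _)

lemma natCast_mul_MP_le (d : ℕ) (r : ℝ≥0) {m : ℕ} (hm : 0 < m) :
    m * MP d (m ^ d * r) ≤ m ^ d * MP d r + ∑ j ∈ Finset.range (Nat.clog 2 m),
      (2 * m / 2 ^ j) ^ d * (√d * 2 ^ j * √(2 * (r * (2 ^ j) ^ d))) := by
  have hmR : (0 : ℝ) < m := by exact_mod_cast hm
  set Λ : Measure (EuclideanSpace ℝ (Fin d)) := r • volume.restrict (gridCell m 0) with hΛdef
  have := isFiniteMeasure_restrict_gridCell (d := d) hmR 0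
  have hΛL : ∀ᵐ x ∂Λ, x ∈ gridCell m 0 :=
    Measure.ae_smul_measure (ae_restrict_mem (measurableSet_gridCell _ 0)) r
  calc m * MP d (m ^ d * r) = meanMatching Λ :=
        (meanMatching_smul_restrict_gridCell (d := d) r (L := m) (by exact_mod_cast hm)).symm
    _ = gridMatching Λ m (2 ^ Nat.clog 2 m) := (gridMatching_eq_meanMatching hmR
        (by exact_mod_cast Nat.le_pow_clog one_lt_two m) hΛL).symm
    _ ≤ gridMatching Λ m 1 + _ := gridMatching_two_pow_le (r := r)
        (by rw [hΛdef, ← Measure.restrict_smul]; exact Measure.restrict_le_self) hΛL fun j hj => by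
          exact_mod_cast ((Nat.lt_clog_iff_pow_lt one_lt_two).1 hj).le
    _ = _ := by rw [hΛdef, gridMatching_one r hm]

end DyadicMerging

section Normalization

lemma summable_rpow_neg_natCast_mul {a s : ℝ} (ha : 1 < a) (hs : 0 < s) :
    Summable fun k : ℕ => a ^ (-(k : ℝ) * s) := by
  have hgeom : (fun k : ℕ => a ^ (-(k : ℝ) * s)) = fun k => (a ^ (-s)) ^ k := by
    ext k
    rw [← Real.rpow_mul_natCast (by positivity), neg_mul_comm, mul_comm]
  rw [hgeom]
  exact summable_geometric_of_lt_one (by positivity)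
    (Real.rpow_lt_one_of_one_lt_of_neg ha (neg_neg_of_pos hs))

lemma rpow_neg_natCast_mul_half_sub_one {a : ℝ} (ha : 0 < a) (d j : ℕ) :
    a ^ (-(j : ℝ) * ((d : ℝ) / 2 - 1)) = a ^ j / √((a ^ j) ^ d) := by
  rw [Real.sqrt_eq_rpow, ← pow_mul, ← Real.rpow_natCast, ← Real.rpow_natCast,
    ← Real.rpow_mul ha.le, ← Real.rpow_sub ha]
  congr 1
  push_cast
  ring

lemma dyadic_merging_cost_eq (d j : ℕ) {L r : ℝ} (hr : 0 ≤ r) :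
    (2 * L / 2 ^ j) ^ d * (√d * 2 ^ j * √(2 * (r * (2 ^ j) ^ d))) =
      L ^ d * √r * (2 ^ d * √(2 * d) * (2 : ℝ) ^ (-(j : ℝ) * ((d : ℝ) / 2 - 1))) := by
  have hsq : √(((2 : ℝ) ^ j) ^ d) ^ 2 = (2 ^ j) ^ d := Real.sq_sqrt (by positivity)
  rw [rpow_neg_natCast_mul_half_sub_one two_pos, Real.sqrt_mul zero_le_two, Real.sqrt_mul hr,
    Real.sqrt_mul zero_le_two, div_pow, mul_pow]
  field_simp
  rw [hsq]
  ring

lemma rpow_one_sub_one_div_pow_mul {a x : ℝ} (ha : 0 < a) (hx : 0 ≤ x) {d : ℕ} (hd : d ≠ 0) :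
    (a ^ d * x) ^ (1 - 1 / (d : ℝ)) = a ^ d / a * x ^ (1 - 1 / (d : ℝ)) := by
  rw [Real.mul_rpow (by positivity) hx, Real.rpow_sub (by positivity), Real.rpow_one, one_div,
    Real.pow_rpow_inv_natCast ha.le hd]

lemma rpow_one_sub_eq_sqrt_mul {x : ℝ} (hx : 0 < x) (s : ℝ) :
    x ^ (1 - s) = √x * x ^ (1 / 2 - s) := by
  rw [Real.sqrt_eq_rpow, ← Real.rpow_add hx]
  ring_nf

lemma MP_pow_mul_le {d m : ℕ}
    (hsum : Summable fun k : ℕ => (2 : ℝ) ^ (-(k : ℝ) * ((d : ℝ) / 2 - 1)))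
    (hm : 0 < m) {N : ℝ} (hN : 0 ≤ N) :
    MP d (m ^ d * N) ≤ m ^ d / m * (MP d N + √N * (2 ^ d * √(2 * d) *
      ∑' k : ℕ, (2 : ℝ) ^ (-(k : ℝ) * ((d : ℝ) / 2 - 1)))) := by
  have hmR : (0 : ℝ) < m := by exact_mod_cast hm
  lift N to ℝ≥0 using hN
  have hmerge := natCast_mul_MP_le d N hm
  simp only [dyadic_merging_cost_eq d _ N.coe_nonneg, ← Finset.mul_sum] at hmerge
  rw [div_mul_eq_mul_div, le_div_iff₀' hmR, mul_add, ← mul_assoc _ √N]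
  refine hmerge.trans ?_
  gcongr
  exact hsum.sum_le_tsum _ fun k _ => by positivity

end Normalization

/-- For `d ≥ 3`, the normalized Poissonized mean matching length satisfies
`M(m^d N)/(m^d N)^{1−1/d} ≤ M(N)/N^{1−1/d} + C_d / N^{1/2−1/d}` where
`C_d = 2^d √(2d) ∑_{k=0}^∞ 2^{−k(d/2−1)}` is a finite constant depending only on `d`. -/
theorem MP_normalized_subadditive
    (d : ℕ) (hd : 3 ≤ d) (m : ℕ) (hm : 1 ≤ m) (N : ℝ) (hN : 0 < N) :
    Summable (fun k : ℕ => (2 : ℝ) ^ (-(k : ℝ) * ((d : ℝ) / 2 - 1))) ∧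
    MP d ((m : ℝ) ^ d * N) / ((m : ℝ) ^ d * N) ^ (1 - 1 / (d : ℝ)) ≤
      MP d N / N ^ (1 - 1 / (d : ℝ)) +
        (2 ^ d * Real.sqrt (2 * d) *
            ∑' k : ℕ, (2 : ℝ) ^ (-(k : ℝ) * ((d : ℝ) / 2 - 1))) /
          N ^ (1 / 2 - 1 / (d : ℝ)) := by
  have hdR : (3 : ℝ) ≤ d := by exact_mod_cast hd
  have hmR : (0 : ℝ) < m := by exact_mod_cast hm
  have hsum : Summable fun k : ℕ => (2 : ℝ) ^ (-(k : ℝ) * ((d : ℝ) / 2 - 1)) :=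
    summable_rpow_neg_natCast_mul one_lt_two (by linarith)
  refine ⟨hsum, ?_⟩
  set C := 2 ^ d * √(2 * d) * ∑' k : ℕ, (2 : ℝ) ^ (-(k : ℝ) * ((d : ℝ) / 2 - 1))
  calc MP d (m ^ d * N) / (m ^ d * N) ^ (1 - 1 / (d : ℝ))
      ≤ m ^ d / m * (MP d N + √N * C) / (m ^ d / m * N ^ (1 - 1 / (d : ℝ))) := by
        rw [rpow_one_sub_one_div_pow_mul hmR hN.le (by lia)]
        gcongr
        exact MP_pow_mul_le hsum hm hN.le
    _ = MP d N / N ^ (1 - 1 / (d : ℝ)) + √N * C / N ^ (1 - 1 / (d : ℝ)) := by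
        rw [mul_div_mul_left _ _ (by positivity), add_div]
    _ = MP d N / N ^ (1 - 1 / (d : ℝ)) + C / N ^ (1 / 2 - 1 / (d : ℝ)) := by
        rw [rpow_one_sub_eq_sqrt_mul hN, mul_div_mul_left _ _ (Real.sqrt_pos.2 hN).ne']
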